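/- arXiv:2605.27212 — 4 statements merged into one kernel-verified Lean document; each statement's English description precedes it below -/
import Mathlib

section
/- Fix an odd prime p and 0 < α₀ < α₁ < (p−1)/p, and define J_p(α₀,α₁) = ∫_{α₀}^{α₁} log((p−1)(1−u)/u) du. For every η > 0 there is r₀ such that for all r ≥ r₀ and every T ≤ r³: sup_{s ≥ α₁·r} P_s( inf_{0≤t≤T} S_t < α₀·r ) ≤ T·exp(−(J_p(α₀,α₁) − η)·r), where (S_t) is the birth–death chain on {1,…,r} with rates B_s, D_s. -/
open Finset

noncomputable section

/-- Birth probability from state `s` (real-valued). -/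
def bdB (p r : ℕ) (s : ℝ) : ℝ := (((p : ℝ) - 1) / p) * (s * ((r : ℝ) - s)) / ((r : ℝ) * ((r : ℝ) - 1))

/-- Death probability from state `s` (real-valued). -/
def bdD (p r : ℕ) (s : ℝ) : ℝ := (1 / (p : ℝ)) * (s * (s - 1)) / ((r : ℝ) * ((r : ℝ) - 1))

/-- The birth–death chain on `{1,…,r}` (state `i : Fin r` has value `i+1`). -/
def bdM (p r : ℕ) : Matrix (Fin r) (Fin r) ℝ := fun i j =>
  if (j : ℕ) = (i : ℕ) + 1 then bdB p r ((i : ℕ) + 1)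
  else if ((j : ℕ) + 1) = (i : ℕ) then bdD p r ((i : ℕ) + 1)
  else if j = i then 1 - bdB p r ((i : ℕ) + 1) - bdD p r ((i : ℕ) + 1)
  else 0

/-- The chain killed on entering `{s : s < α₀ r}`. -/
def bdKillLow (p r : ℕ) (α₀ : ℝ) : Matrix (Fin r) (Fin r) ℝ := fun i j =>
  if (α₀ * r ≤ ((i : ℕ) + 1 : ℝ)) ∧ (α₀ * r ≤ ((j : ℕ) + 1 : ℝ)) then bdM p r i j else 0

theorem bd_nonneg (p r : ℕ) (hp : 2 ≤ p) (hr : 2 ≤ r) (s : ℝ) (h1 : 1 ≤ s) (h2 : s ≤ r) :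
    0 ≤ bdB p r s ∧ 0 ≤ bdD p r s ∧ bdB p r s + bdD p r s ≤ 1 := by
  have hp' : (2 : ℝ) ≤ p := by exact_mod_cast hp
  have hr' : (2 : ℝ) ≤ r := by exact_mod_cast hr
  have hpp : (0 : ℝ) < p := by linarith
  have hden : (0 : ℝ) < (r : ℝ) * ((r : ℝ) - 1) := mul_pos (by linarith) (by linarith)
  have a1 : 0 ≤ ((p : ℝ) - 1) / p := div_nonneg (by linarith) (by linarith)
  have a2 : 0 ≤ 1 / (p : ℝ) := by positivity
  have a3 : ((p : ℝ) - 1) / p + 1 / p = 1 := by field_simp; ring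
  have b1 : 0 ≤ s * ((r : ℝ) - s) := mul_nonneg (by linarith) (by linarith)
  have b2 : 0 ≤ s * (s - 1) := mul_nonneg (by linarith) (by linarith)
  refine ⟨?_, ?_, ?_⟩
  · unfold bdB; exact div_nonneg (mul_nonneg a1 b1) hden.le
  · unfold bdD; exact div_nonneg (mul_nonneg a2 b2) hden.le
  · unfold bdB bdD
    rw [← add_div, div_le_one hden]
    have c1 : s * ((r : ℝ) - s) ≤ r * (r - 1) :=
      mul_le_mul h2 (by linarith) (by linarith) (by linarith)
    have c2 : s * (s - 1) ≤ r * ((r : ℝ) - 1) :=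
      mul_le_mul h2 (by linarith) (by linarith) (by linarith)
    have d1 := mul_le_mul_of_nonneg_left c1 a1
    have d2 := mul_le_mul_of_nonneg_left c2 a2
    have e : ((p : ℝ) - 1) / p * (r * ((r : ℝ) - 1)) + 1 / p * (r * ((r : ℝ) - 1))
        = r * ((r : ℝ) - 1) := by rw [← add_mul, a3, one_mul]
    linarith

theorem bdM_sum (p r : ℕ) (i : Fin r) (hi : 1 ≤ (i : ℕ)) (w : ℕ → ℝ) :
    ∑ k : Fin r, bdM p r i k * w k =
      bdB p r ((i : ℕ) + 1) * w (i + 1) + bdD p r ((i : ℕ) + 1) * w (i - 1)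
        + (1 - bdB p r ((i : ℕ) + 1) - bdD p r ((i : ℕ) + 1)) * w i := by
  have hil := i.2
  obtain ⟨F, hF⟩ : ∃ F : ℕ → ℝ, F = (fun k : ℕ => (if k = (i : ℕ) + 1 then bdB p r ((i : ℕ) + 1) * w (i + 1) else 0)
      + (if k = (i : ℕ) - 1 then bdD p r ((i : ℕ) + 1) * w (i - 1) else 0)
      + (if k = (i : ℕ) then (1 - bdB p r ((i : ℕ) + 1) - bdD p r ((i : ℕ) + 1)) * w i else 0)) := ⟨_, rfl⟩
  have key : ∀ k : Fin r, bdM p r i k * w k = F k := by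
    intro k
    rw [hF]
    unfold bdM
    by_cases h1 : (k : ℕ) = i + 1
    · simp [h1]; intro h; omega
    · by_cases h2 : (k : ℕ) + 1 = i
      · have h3 : (k : ℕ) = i - 1 := by omega
        have h4 : (k : ℕ) ≠ i := by omega
        simp only [h1, h2, h4, if_true, if_false]
        rw [if_pos h3, h3]; ring
      · have h3 : (k : ℕ) ≠ i - 1 := by omega
        by_cases h4 : k = i
        · subst h4; simp [h3]
        · have h5 : (k : ℕ) ≠ i := fun h => h4 (Fin.ext h)
          simp [h1, h2, h3, h4, h5]
  rw [Finset.sum_congr rfl (fun k _ => key k), Fin.sum_univ_eq_sum_range F r, hF]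
  simp only [Finset.sum_add_distrib, Finset.sum_ite_eq', Finset.mem_range]
  rw [if_pos (by omega : (i : ℕ) - 1 < r), if_pos hil]
  by_cases h : (i : ℕ) + 1 < r
  · rw [if_pos h]
  · have : (i : ℕ) + 1 = r := by omega
    have h0 : bdB p r ((i : ℕ) + 1) = 0 := by
      unfold bdB
      have : ((i : ℕ) + 1 : ℝ) = r := by exact_mod_cast this
      rw [this]; simp
    rw [if_neg h, h0]; ring

theorem bd_chain (p r : ℕ) (hp : 2 ≤ p) (hr : 2 ≤ r) (α₀ : ℝ) (h0 : 1 < α₀ * r)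
    (m : ℕ) (hm : α₀ * r ≤ m) (φ : ℕ → ℝ) (hφ : ∀ k, 0 ≤ φ k)
    (hstep : ∀ s : ℕ, α₀ * r ≤ (s + 1 : ℕ) → s + 1 < m → s + 1 ≤ r →
      bdD p r ((s + 1 : ℕ) : ℝ) * φ s ≤ bdB p r ((s + 1 : ℕ) : ℝ) * φ (s + 1))
    (hkill : ∀ k : ℕ, (k : ℝ) < α₀ * r → α₀ * r ≤ (k + 1 : ℕ) → 1 ≤ φ k)
    (T : ℕ) (i : Fin r) (hi : α₀ * r ≤ ((i : ℕ) + 1 : ℝ)) :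
    1 - (∑ k ∈ Finset.Ico ((i : ℕ) + 1) m, φ k) - T * φ (m - 1)
      ≤ ∑ j, ((bdKillLow p r α₀) ^ T) i j := by
  have hVnn : ∀ s, 0 ≤ ∑ k ∈ Finset.Ico s m, φ k := fun s => Finset.sum_nonneg (fun k _ => hφ k)
  have hmpos : 1 < m := by
    have : (1 : ℝ) < m := lt_of_lt_of_le h0 hm
    exact_mod_cast this
  induction T generalizing i with
  | zero =>
    simp [Matrix.one_apply]
    exact hVnn _
  | succ T ih =>
    have hi1 : 1 ≤ (i : ℕ) := by
      by_contra h
      have : (i : ℕ) = 0 := by omega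
      rw [this] at hi; norm_num at hi; linarith
    have hil := i.2
    have hil' : ((i : ℕ) + 1 : ℝ) ≤ r := by exact_mod_cast hil
    obtain ⟨hB, hD, hBD⟩ := bd_nonneg p r hp hr ((i : ℕ) + 1) (by
      have : (0 : ℝ) ≤ (i : ℕ) := Nat.cast_nonneg _
      linarith) hil'
    have hMnn : ∀ k, 0 ≤ bdM p r i k := by
      intro k; unfold bdM
      split_ifs
      · exact hB
      · exact hD
      · linarith
      · exact le_rfl
    have e1 : ∑ j, ((bdKillLow p r α₀) ^ (T + 1)) i j
        = ∑ k, bdKillLow p r α₀ i k * ∑ j, ((bdKillLow p r α₀) ^ T) k j := by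
      simp only [pow_succ', Matrix.mul_apply, Finset.mul_sum]
      rw [Finset.sum_comm]
    rw [e1]
    set w : ℕ → ℝ := fun k => 1 - (∑ l ∈ Finset.Ico (k + 1) m, φ l) - T * φ (m - 1) with hw
    have e2 : ∑ k : Fin r, bdM p r i k * w k
        ≤ ∑ k, bdKillLow p r α₀ i k * ∑ j, ((bdKillLow p r α₀) ^ T) k j := by
      apply Finset.sum_le_sum
      intro k _
      by_cases hk : α₀ * r ≤ ((k : ℕ) + 1 : ℝ)
      · have : bdKillLow p r α₀ i k = bdM p r i k := by
          unfold bdKillLow; rw [if_pos ⟨hi, hk⟩]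
        rw [this]
        exact mul_le_mul_of_nonneg_left (ih k hk) (hMnn k)
      · have : bdKillLow p r α₀ i k = 0 := by
          unfold bdKillLow; rw [if_neg (fun h => hk h.2)]
        rw [this, zero_mul]
        push Not at hk
        have hki : (k : ℕ) < i := by
          have : ((k : ℕ) : ℝ) < (i : ℕ) := by linarith
          exact_mod_cast this
        by_cases hki2 : (k : ℕ) + 1 = i
        · apply mul_nonpos_of_nonneg_of_nonpos (hMnn k)
          have h1 : 1 ≤ φ ((k : ℕ) + 1) := by
            apply hkill
            · push_cast; exact hk
            · rw [hki2]; push_cast; exact hi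
          have h2 : φ ((k : ℕ) + 1) ≤ ∑ l ∈ Finset.Ico ((k : ℕ) + 1) m, φ l := by
            apply Finset.single_le_sum (f := φ) (fun l _ => hφ l)
            rw [Finset.mem_Ico]
            refine ⟨le_rfl, ?_⟩
            have : (((k : ℕ) + 1 : ℕ) : ℝ) < m := by push_cast; linarith
            exact_mod_cast this
          have h3 : 0 ≤ (T : ℝ) * φ (m - 1) := mul_nonneg (Nat.cast_nonneg _) (hφ _)
          simp only [hw]; linarith
        · have : bdM p r i k = 0 := by
            unfold bdM
            rw [if_neg (by omega), if_neg hki2, if_neg (by intro h; subst h; omega)]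
          rw [this, zero_mul]
    refine le_trans ?_ e2
    rw [bdM_sum p r i hi1 w]
    obtain ⟨n, hn⟩ : ∃ n, (i : ℕ) = n + 1 := ⟨i - 1, by omega⟩
    simp only [hw]
    have hst := hstep (i : ℕ) (by push_cast; exact hi)
    push_cast at hst ⊢
    generalize bdB p r ((i : ℕ) + 1) = b at *
    generalize bdD p r ((i : ℕ) + 1) = d at *
    have hi' : (i : ℕ) - 1 + 1 = i := by omega
    rw [hi']
    have hε := hφ (m - 1)
    rcases lt_trichotomy ((i : ℕ) + 1) m with h | h | h
    · rw [Finset.sum_eq_sum_Ico_succ_bot (by omega : (i : ℕ) < m),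
        Finset.sum_eq_sum_Ico_succ_bot h]
      have := hst h (by omega)
      nlinarith
    · rw [Finset.sum_eq_sum_Ico_succ_bot (by omega : (i : ℕ) < m),
        Finset.Ico_eq_empty (by omega : ¬ (i : ℕ) + 1 < m), Finset.Ico_eq_empty (by omega : ¬ (i : ℕ) + 1 + 1 < m)]
      have : m - 1 = i := by omega
      rw [this] at hε ⊢
      simp only [Finset.sum_empty]
      nlinarith
    · rw [Finset.Ico_eq_empty (by omega : ¬ (i : ℕ) < m),
        Finset.Ico_eq_empty (by omega : ¬ (i : ℕ) + 1 < m), Finset.Ico_eq_empty (by omega : ¬ (i : ℕ) + 1 + 1 < m)]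
      simp only [Finset.sum_empty]
      nlinarith

/-- integrand -/
def bdg (p : ℕ) (u : ℝ) : ℝ := Real.log (((p : ℝ) - 1) * (1 - u) / u)

theorem bdg_anti (p : ℕ) (hp : 2 ≤ p) (u v : ℝ) (hu : 0 < u) (huv : u ≤ v) (hv : v < 1) :
    bdg p v ≤ bdg p u := by
  have hp' : (2 : ℝ) ≤ p := by exact_mod_cast hp
  unfold bdg
  apply Real.log_le_log
  · exact div_pos (mul_pos (by linarith) (by linarith)) (by linarith)
  · apply div_le_div₀
    · exact mul_nonneg (by linarith) (by linarith)
    · exact mul_le_mul_of_nonneg_left (by linarith) (by linarith)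
    · exact hu
    · exact huv

theorem bdg_int (p : ℕ) (hp : 2 ≤ p) (a b : ℝ) (ha : 0 < a) (ha1 : a < 1) (hb : 0 < b)
    (hb1 : b < 1) : IntervalIntegrable (bdg p) MeasureTheory.volume a b := by
  have hp' : (2 : ℝ) ≤ p := by exact_mod_cast hp
  apply ContinuousOn.intervalIntegrable
  intro x hx
  have hx0 : 0 < x := lt_of_lt_of_le (lt_min ha hb) hx.1
  have hx1 : x < 1 := lt_of_le_of_lt hx.2 (max_lt ha1 hb1)
  apply ContinuousAt.continuousWithinAt
  unfold bdg
  apply ContinuousAt.log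
  · apply ContinuousAt.div
    · fun_prop
    · fun_prop
    · exact hx0.ne'
  · exact (div_pos (mul_pos (by linarith) (by linarith)) hx0).ne'

theorem bdg_le (p : ℕ) (hp : 2 ≤ p) (a b c : ℝ) (ha : 0 < a) (hab : a ≤ b) (hb1 : b < 1)
    (hc : bdg p a ≤ c) : ∫ u in a..b, bdg p u ≤ c * (b - a) := by
  have := intervalIntegral.integral_mono_on hab
    (bdg_int p hp a b ha (by linarith) (by linarith) hb1)
    (intervalIntegrable_const (c := c))
    (fun x hx => (bdg_anti p hp a x ha hx.1 (by linarith [hx.2])).trans hc)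
  rw [intervalIntegral.integral_const, smul_eq_mul] at this
  linarith

theorem bdg_nonneg (p : ℕ) (hp : 2 ≤ p) (u : ℝ) (hu : 0 < u) (h : u ≤ ((p : ℝ) - 1) / p) :
    0 ≤ bdg p u := by
  have hp' : (2 : ℝ) ≤ p := by exact_mod_cast hp
  rw [le_div_iff₀ (by linarith)] at h
  unfold bdg
  apply Real.log_nonneg
  rw [le_div_iff₀ hu]
  nlinarith

set_option maxHeartbeats 2000000 in
theorem stmt14 :
    ∀ p : ℕ, Nat.Prime p → p ≠ 2 →
    ∀ α₀ α₁ : ℝ, 0 < α₀ → α₀ < α₁ → α₁ < ((p : ℝ) - 1) / p →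
      ∀ η : ℝ, 0 < η → ∃ r₀ : ℕ, ∀ r : ℕ, r₀ ≤ r →
        ∀ T : ℕ, (T : ℝ) ≤ (r : ℝ) ^ 3 →
          ∀ i : Fin r, α₁ * r ≤ ((i : ℕ) + 1 : ℝ) →
            -- P_s(inf_{0≤t≤T} S_t < α₀ r) = 1 − (survival probability of the killed chain)
            1 - (∑ j, ((bdKillLow p r α₀) ^ T) i j) ≤
              (T : ℝ) * Real.exp
                (-(((∫ u in α₀..α₁, Real.log (((p : ℝ) - 1) * (1 - u) / u)) - η) * r)) := by
  intro p hpp _ α₀ α₁ h0 h01 h1 η hη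
  have hp := hpp.two_le
  have hp' : (2 : ℝ) ≤ p := by exact_mod_cast hp
  have hα1 : α₁ < 1 := by
    refine h1.trans ?_
    rw [div_lt_one (by linarith)]; linarith
  have hδ : 0 < η / 2 := by linarith
  set δ := η / 2 with hδdef
  set C := bdg p α₀ with hC
  have hC0 : 0 ≤ C := bdg_nonneg p hp _ h0 (by linarith)
  have ev : ∀ᶠ r : ℕ in Filter.atTop, 2 ≤ r ∧ 2 < α₀ * (r : ℝ) ∧ 1 < (α₁ - α₀) * (r : ℝ)
      ∧ 1 < δ * (1 - α₁) * (r : ℝ) ∧ δ + C < δ * (r : ℝ) := by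
    have lin : ∀ a b : ℝ, 0 < a → ∀ᶠ r : ℕ in Filter.atTop, b < a * (r : ℝ) := by
      intro a b ha
      exact (Filter.Tendsto.const_mul_atTop ha tendsto_natCast_atTop_atTop).eventually_gt_atTop b
    filter_upwards [Filter.eventually_ge_atTop 2, lin α₀ 2 h0, lin (α₁ - α₀) 1 (by linarith),
      lin (δ * (1 - α₁)) 1 (mul_pos hδ (by linarith)), lin δ (δ + C) hδ] with r a b c d e
    exact ⟨a, b, c, d, e⟩
  obtain ⟨r₀, hr₀⟩ := Filter.eventually_atTop.1 ev
  refine ⟨r₀, fun r hr T _ i hi => ?_⟩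
  obtain ⟨hr2, hr3, hr4, hr5, hr6⟩ := hr₀ r hr
  have hrpos : (0 : ℝ) < r := by
    have : (2 : ℝ) ≤ r := by exact_mod_cast hr2
    linarith
  set φ : ℕ → ℝ := fun k => Real.exp (δ - r * ((∫ u in α₀..(k / r : ℝ), bdg p u) - δ * (k / r - α₀)))
    with hφ
  set m := ⌈α₁ * r⌉₊ with hm
  have hm1 : α₁ * r ≤ m := Nat.le_ceil _
  have hm2 : (m : ℝ) < α₁ * r + 1 := Nat.ceil_lt_add_one (mul_nonneg (by linarith) hrpos.le)
  have hα01 : α₀ * r ≤ α₁ * r := by nlinarith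
  have hα0' : α₀ < 1 := by linarith
  have main := bd_chain p r hp hr2 α₀ (by linarith) m (by linarith) φ
    (fun k => (Real.exp_pos _).le) ?_ ?_ T i (by linarith)
  · have hmi : m ≤ (i : ℕ) + 1 := by
      rw [hm]; apply Nat.ceil_le.2; push_cast; exact hi
    rw [Finset.Ico_eq_empty (by omega), Finset.sum_empty] at main
    have hfin : φ (m - 1) ≤ Real.exp
        (-(((∫ u in α₀..α₁, Real.log (((p : ℝ) - 1) * (1 - u) / u)) - η) * r)) := by
      change _ ≤ Real.exp (-(((∫ u in α₀..α₁, bdg p u) - η) * r))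
      have hmge : 1 ≤ m := by
        have : (0 : ℝ) < m := by linarith
        exact_mod_cast this
      simp only [hφ]
      apply Real.exp_le_exp.2
      rw [Nat.cast_sub hmge, Nat.cast_one]
      set x := ((m : ℝ) - 1) / r with hx
      have hxr : x * r = m - 1 := by rw [hx]; field_simp
      have x0 : α₀ ≤ x := by
        rw [hx, le_div_iff₀ hrpos]; nlinarith
      have x1 : x ≤ α₁ := by
        rw [hx, div_le_iff₀ hrpos]; linarith
      have split := intervalIntegral.integral_add_adjacent_intervals
        (bdg_int p hp α₀ x h0 (by linarith) (by linarith) (by linarith))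
        (bdg_int p hp x α₁ (by linarith) (by linarith) (by linarith) hα1)
      have le := bdg_le p hp x α₁ C (by linarith) x1 hα1
        (bdg_anti p hp α₀ x h0 x0 (by linarith))
      rw [← split]
      have le2 : (∫ u in x..α₁, bdg p u) * r ≤ C := by
        have := mul_le_mul_of_nonneg_right le hrpos.le
        have h2 : C * (α₁ * r - x * r) ≤ C * 1 := mul_le_mul_of_nonneg_left (by linarith) hC0
        nlinarith
      have le3 : δ * (x * r - α₀ * r) ≤ δ * r := by
        apply mul_le_mul_of_nonneg_left _ hδ.le
        nlinarith
      have : η = 2 * δ := by rw [hδdef]; ring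
      rw [this]
      nlinarith
    have := mul_le_mul_of_nonneg_left hfin (Nat.cast_nonneg (α := ℝ) T)
    linarith
  · intro s hs1 hs2 hs3
    push_cast at hs1 ⊢
    have hs2' : ((s : ℝ) + 1) + 1 ≤ m := by exact_mod_cast hs2
    have hs : (1 : ℝ) < s := by linarith
    have hsr : ((s : ℝ) + 1) < α₁ * r := by linarith
    have hgap : 1 < δ * (r - (s + 1)) := by nlinarith
    have hgap0 : 0 < (r : ℝ) - (s + 1) := by nlinarith
    set y := (s : ℝ) / r with hy
    set z := ((s : ℝ) + 1) / r with hz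
    have hyr : y * r = s := by rw [hy]; field_simp
    have hzr : z * r = s + 1 := by rw [hz]; field_simp
    have hy0 : 0 < y := by rw [hy]; exact div_pos (by linarith) hrpos
    have hyz : y ≤ z := by rw [hy, hz]; gcongr; linarith
    have hz1 : z < 1 := by
      rw [hz, div_lt_one hrpos]; nlinarith
    have le := bdg_le p hp y z _ hy0 hyz hz1 le_rfl
    have split := intervalIntegral.integral_add_adjacent_intervals
        (bdg_int p hp α₀ y h0 (by linarith) (by linarith) (by linarith))
        (bdg_int p hp y z (by linarith) (by linarith) (by linarith) hz1)
    have hφ1 : φ s ≤ φ (s + 1) * Real.exp (bdg p y - δ) := by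
      simp only [hφ]
      rw [← Real.exp_add]
      apply Real.exp_le_exp.2
      push_cast
      rw [← hy, ← hz, ← split]
      have := mul_le_mul_of_nonneg_right le hrpos.le
      have e : bdg p y * (z - y) * r = bdg p y := by
        rw [mul_assoc, sub_mul, hyr, hzr]; ring
      rw [e] at this
      nlinarith
    have hexp : Real.exp (bdg p y - δ) * s ≤ (p - 1) * (r - (s + 1)) := by
      rw [Real.exp_sub]
      have e : Real.exp (bdg p y) = ((p : ℝ) - 1) * (r - s) / s := by
        unfold bdg
        rw [Real.exp_log (div_pos (mul_pos (by linarith) (by linarith)) hy0), hy]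
        field_simp
      rw [e, div_mul_eq_mul_div, div_mul_cancel₀ _ (by linarith), div_le_iff₀ (Real.exp_pos _)]
      have h2 := Real.add_one_le_exp δ
      have h3 : (r : ℝ) - s ≤ (r - (s + 1)) * Real.exp δ := by nlinarith
      have := mul_le_mul_of_nonneg_left h3 (by linarith : (0:ℝ) ≤ p - 1)
      linarith
    have hr' : (2 : ℝ) ≤ r := by exact_mod_cast hr2
    have hφp : 0 < φ (s + 1) := Real.exp_pos _
    have hk : (s : ℝ) * φ s ≤ (p - 1) * (r - (s + 1)) * φ (s + 1) := by
      have a := mul_le_mul_of_nonneg_left hφ1 (by linarith : (0:ℝ) ≤ s)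
      have b := mul_le_mul_of_nonneg_left hexp hφp.le
      linarith
    have hcoef : 0 ≤ ((s : ℝ) + 1) / (p * (r * (r - 1))) :=
      div_nonneg (by linarith) (mul_nonneg (by linarith) (mul_nonneg (by linarith) (by linarith)))
    have := mul_le_mul_of_nonneg_left hk hcoef
    unfold bdD bdB
    calc _ = ((s : ℝ) + 1) / (p * (r * (r - 1))) * (s * φ s) := by
            simp only [div_eq_mul_inv, mul_inv]; ring
      _ ≤ _ := this
      _ = _ := by simp only [div_eq_mul_inv, mul_inv]; ring
  · intro k hk1 hk2
    push_cast at hk2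
    simp only [hφ]
    apply Real.one_le_exp
    set y := (k : ℝ) / r with hy
    have hyr : y * r = k := by rw [hy]; field_simp
    have hy0 : 0 < y := by rw [hy]; exact div_pos (by linarith) hrpos
    have hya : y ≤ α₀ := by rw [hy, div_le_iff₀ hrpos]; linarith
    rw [intervalIntegral.integral_symm]
    have nn : 0 ≤ ∫ u in y..α₀, bdg p u := by
      apply intervalIntegral.integral_nonneg hya
      intro u hu
      exact bdg_nonneg p hp u (by linarith [hu.1]) (by linarith [hu.2])
    have := mul_nonneg hrpos.le nn
    have h3 : δ * (α₀ * r - y * r) ≤ δ * 1 := mul_le_mul_of_nonneg_left (by linarith) hδ.le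
    nlinarith
end
end

section
/- Let p be a prime and let U, V be unitary operators on a finite-dimensional complex Hilbert space with U^p = V^p = I. Suppose UV = ζ·VU for some p-th root of unity ζ ≠ 1. Let P_U = (1/p)·Σ_{a=0}^{p−1} U^a and P_V = (1/p)·Σ_{a=0}^{p−1} V^a (the orthogonal projections onto the fixed spaces of U and V). Then ‖P_U P_V‖_op ≤ p^{−1/2}. -/
open Finset

noncomputable section

section aux
variable {A : Type*} [NormedRing A] [StarRing A] [CStarRing A] [NormedAlgebra ℂ A]

def avg (p : ℕ) (u : A) : A := (p : ℂ)⁻¹ • ∑ a ∈ Finset.range p, u ^ a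

omit [StarRing A] [CStarRing A] in
theorem mul_avg {p : ℕ} {u : A} (h : u ^ p = 1) : u * avg p u = avg p u := by
  unfold avg
  rw [mul_smul_comm, Finset.mul_sum]
  congr 1
  have h1 := Finset.sum_range_succ (fun a => u ^ a) p
  rw [Finset.sum_range_succ' (fun a => u ^ a) p] at h1
  simp only [h, pow_zero, add_left_inj] at h1
  rw [← h1]
  exact Finset.sum_congr rfl fun a _ => (pow_succ' u a).symm

omit [StarRing A] [CStarRing A] in
theorem avg_mul {p : ℕ} {u : A} (h : u ^ p = 1) : avg p u * u = avg p u := by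
  have hc : Commute u (avg p u) := by
    unfold avg
    exact (Commute.sum_right _ _ _ fun a _ => (Commute.refl u).pow_right a).smul_right _
  rw [← hc.eq, mul_avg h]

omit [StarRing A] [CStarRing A] in
theorem mul_avg_of {p : ℕ} (hp : p ≠ 0) {u q : A} (h : q * u = q) : q * avg p u = q := by
  have hk : ∀ k : ℕ, q * u ^ k = q := by
    intro k
    induction k with
    | zero => simp
    | succ k ih => rw [pow_succ, ← mul_assoc, ih, h]
  unfold avg
  rw [mul_smul_comm, Finset.mul_sum, Finset.sum_congr rfl fun a _ => hk a]
  have : (p : ℂ) ≠ 0 := by exact_mod_cast hp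
  rw [Finset.sum_const, Finset.card_range, ← Nat.cast_smul_eq_nsmul ℂ, smul_smul,
    inv_mul_cancel₀ this, one_smul]

omit [CStarRing A] in
theorem star_avg {p : ℕ} (hp : p ≠ 0) {u : A} (h : u ^ p = 1) (hu : star u * u = 1) :
    star (avg p u) = avg p u := by
  have h1 : star (avg p u) * u = star (avg p u) := by
    have := congrArg star (mul_avg h)
    rw [star_mul] at this
    calc star (avg p u) * u = star (avg p u) * star u * u := by rw [this]
      _ = _ := by rw [mul_assoc, hu, mul_one]
  have h2 := mul_avg_of hp h1
  have h3 := congrArg star h2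
  rw [star_mul, star_star] at h3
  exact h2.symm.trans h3

theorem norm_avg_le {p : ℕ} (hp : p ≠ 0) {u : A} (h : u ^ p = 1) (hu : star u * u = 1) :
    ‖avg p u‖ ≤ 1 := by
  have h1 := CStarRing.norm_star_mul_self (x := avg p u)
  rw [star_avg hp h hu, mul_avg_of hp (avg_mul h)] at h1
  nlinarith [norm_nonneg (avg p u)]

theorem aux_main {p : ℕ} (hp : p.Prime) {u v : A} {ζ : ℂ} (hu : star u * u = 1)
    (hv : star v * v = 1) (hup : u ^ p = 1) (hvp : v ^ p = 1) (hz : ζ ^ p = 1) (hz1 : ζ ≠ 1)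
    (huv : u * v = ζ • (v * u)) : ‖avg p u * avg p v‖ ≤ (p : ℝ) ^ (-(1 / 2 : ℝ)) := by
  have hp0 := hp.ne_zero
  have hk : ∀ k : ℕ, u * v ^ k = ζ ^ k • (v ^ k * u) := by
    intro k
    induction k with
    | zero => simp
    | succ k ih =>
      rw [pow_succ, ← mul_assoc, ih, smul_mul_assoc, mul_assoc, huv, mul_smul_comm, smul_smul,
        pow_succ, mul_assoc]
  have hord : orderOf ζ = p := orderOf_eq_prime hz hz1 (hp := ⟨hp⟩)
  have hzero : ∀ k ∈ Finset.range p, k ≠ 0 → avg p u * v ^ k * avg p u = 0 := by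
    intro k hkp hk0
    have e : avg p u * v ^ k * avg p u = ζ ^ k • (avg p u * v ^ k * avg p u) := by
      calc avg p u * v ^ k * avg p u = avg p u * (u * v ^ k) * avg p u := by
            rw [← mul_assoc, avg_mul hup]
        _ = ζ ^ k • (avg p u * v ^ k * (u * avg p u)) := by
            rw [hk]; simp only [mul_smul_comm, smul_mul_assoc, mul_assoc]
        _ = _ := by rw [mul_avg hup]
    have e2 : (1 - ζ ^ k) • (avg p u * v ^ k * avg p u) = 0 := by
      rw [sub_smul, one_smul, ← e, sub_self]
    rcases smul_eq_zero.1 e2 with h | h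
    · exfalso
      have := orderOf_dvd_of_pow_eq_one (sub_eq_zero.1 h).symm
      rw [hord] at this
      exact absurd (Nat.le_of_dvd (Nat.pos_of_ne_zero hk0) this)
        (not_le.2 (Finset.mem_range.1 hkp))
    · exact h
  have hid : avg p u * avg p v * avg p u = (p : ℂ)⁻¹ • avg p u := by
    conv_lhs => rw [avg.eq_def p v]
    rw [mul_smul_comm, smul_mul_assoc, Finset.mul_sum, Finset.sum_mul,
      Finset.sum_eq_single_of_mem 0 (Finset.mem_range.2 hp.pos) hzero, pow_zero, mul_one,
      mul_avg_of hp0 (avg_mul hup)]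
  have hn := CStarRing.norm_self_mul_star (x := avg p u * avg p v)
  rw [star_mul, star_avg hp0 hup hu, star_avg hp0 hvp hv, ← mul_assoc,
    mul_assoc (avg p u) (avg p v) (avg p v), mul_avg_of hp0 (avg_mul hvp), hid, norm_smul,
    norm_inv, Complex.norm_natCast] at hn
  have hle := norm_avg_le hp0 hup hu
  have hsq : ‖avg p u * avg p v‖ ^ 2 ≤ (p : ℝ)⁻¹ := by
    rw [sq, ← hn]
    exact mul_le_of_le_one_right (by positivity) hle
  rw [Real.rpow_neg (by positivity), ← Real.sqrt_eq_rpow, ← Real.sqrt_inv]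
  exact Real.le_sqrt_of_sq_le hsq

end aux

theorem stmt15 :
    ∀ (p : ℕ), Nat.Prime p →
    ∀ (E : Type) [NormedAddCommGroup E] [InnerProductSpace ℂ E] [FiniteDimensional ℂ E]
      (U V : E →L[ℂ] E) (ζ : ℂ),
      -- U and V are unitary
      ContinuousLinearMap.adjoint U * U = 1 → U * ContinuousLinearMap.adjoint U = 1 →
      ContinuousLinearMap.adjoint V * V = 1 → V * ContinuousLinearMap.adjoint V = 1 →
      -- of order dividing p
      U ^ p = 1 → V ^ p = 1 →
      -- commutation by a nontrivial p-th root of unity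
      ζ ^ p = 1 → ζ ≠ 1 → U * V = ζ • (V * U) →
      ‖((p : ℂ)⁻¹ • ∑ a ∈ Finset.range p, U ^ a) *
          ((p : ℂ)⁻¹ • ∑ a ∈ Finset.range p, V ^ a)‖ ≤ (p : ℝ) ^ (-(1 / 2 : ℝ)) := by
  intro p hp E _ _ _ U V ζ hU _ hV _ hUp hVp hz hz1 hUV
  haveI : CompleteSpace E := FiniteDimensional.complete ℂ E
  exact aux_main hp (u := U) (v := V) hU hV hUp hVp hz hz1 hUV
end
end

section
/- Let P_1,…,P_N be orthogonal projections on a finite-dimensional complex Hilbert space, and let 0 ≤ α < 1 and δ ∈ (0,1]. Suppose that for at least δ·N² ordered pairs (j,ℓ) ∈ {1,…,N}² one has ‖P_j P_ℓ‖_op ≤ α. Then ‖(1/N)·Σ_{j=1}^N P_j‖_op ≤ 1 − (δ/2)·(1−α). In particular (two-projection case), if P, Q are orthogonal projections with s = ‖PQ‖_op, then the largest eigenvalue of (P+Q)/2 is at most (1+s)/2. -/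
open Finset
open scoped Classical

noncomputable section

theorem two_proj_apply {E : Type} [NormedAddCommGroup E] [InnerProductSpace ℂ E]
    [FiniteDimensional ℂ E] (P Q : E →L[ℂ] E)
    (hP : P * P = P) (hPa : ContinuousLinearMap.adjoint P = P)
    (hQ : Q * Q = Q) (hQa : ContinuousLinearMap.adjoint Q = Q) (x : E) :
    ‖P x + Q x‖ ≤ (1 + ‖P * Q‖) * ‖x‖ := by
  have hs : 0 ≤ ‖P * Q‖ := norm_nonneg _
  set s := ‖P * Q‖ with hsdef
  have sq : ∀ (R : E →L[ℂ] E), R * R = R → ContinuousLinearMap.adjoint R = R →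
      RCLike.re (inner ℂ (R x) x) = ‖R x‖ ^ 2 := by
    intro R h1 h2
    have h3 : inner ℂ (R x) (R x) = inner ℂ (R x) x := by
      have h4 := ContinuousLinearMap.adjoint_inner_left R x (R x)
      rw [h2] at h4
      have h5 : R (R x) = R x := by
        have := congrArg (fun T : E →L[ℂ] E => T x) h1
        simpa using this
      rw [h5] at h4
      exact h4.symm
    rw [← h3]
    exact inner_self_eq_norm_sq _
  have h1 := sq P hP hPa
  have h2 := sq Q hQ hQa
  have hcross : RCLike.re (inner ℂ (P x) (Q x)) ≤ s * (‖P x‖ * ‖Q x‖) := by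
    have e1 : P (P x) = P x := by
      have := congrArg (fun T : E →L[ℂ] E => T x) hP
      simpa using this
    have e2 : Q (Q x) = Q x := by
      have := congrArg (fun T : E →L[ℂ] E => T x) hQ
      simpa using this
    have h4 := ContinuousLinearMap.adjoint_inner_left P (Q x) (P x)
    rw [hPa, e1] at h4
    have h5 : ‖P (Q x)‖ ≤ s * ‖Q x‖ := by
      have := (P * Q).le_opNorm (Q x)
      simpa [e2] using this
    calc RCLike.re (inner ℂ (P x) (Q x)) ≤ ‖P x‖ * ‖P (Q x)‖ := by
          rw [h4]; exact re_inner_le_norm _ _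
      _ ≤ ‖P x‖ * (s * ‖Q x‖) := by gcongr
      _ = _ := by ring
  have hsum : ‖P x + Q x‖ ^ 2 ≤ (1 + s) * (‖P x‖ ^ 2 + ‖Q x‖ ^ 2) := by
    rw [norm_add_sq (𝕜 := ℂ)]
    nlinarith [mul_nonneg hs (sq_nonneg (‖P x‖ - ‖Q x‖))]
  have hcs : ‖P x‖ ^ 2 + ‖Q x‖ ^ 2 ≤ ‖P x + Q x‖ * ‖x‖ := by
    rw [← h1, ← h2, ← map_add, ← inner_add_left]
    exact re_inner_le_norm _ _
  have hfin : ‖P x + Q x‖ * ‖P x + Q x‖ ≤ ‖P x + Q x‖ * ((1 + s) * ‖x‖) := by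
    have := mul_le_mul_of_nonneg_left hcs (by linarith : 0 ≤ 1 + s)
    nlinarith
  rcases (norm_nonneg (P x + Q x)).eq_or_lt with h0 | h0
  · rw [← h0]; positivity
  · exact le_of_mul_le_mul_left hfin h0

theorem proj_norm_le_one {E : Type} [NormedAddCommGroup E] [InnerProductSpace ℂ E]
    [FiniteDimensional ℂ E] (P : E →L[ℂ] E)
    (hP : P * P = P) (hPa : ContinuousLinearMap.adjoint P = P) : ‖P‖ ≤ 1 := by
  have h := ContinuousLinearMap.norm_adjoint_comp_self P
  rw [hPa] at h
  have h' : ‖P‖ = ‖P‖ * ‖P‖ := by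
    rw [← h]; exact congrArg norm hP.symm
  by_contra hc
  nlinarith

theorem stmt16 :
    ∀ (E : Type) [NormedAddCommGroup E] [InnerProductSpace ℂ E] [FiniteDimensional ℂ E],
      -- main claim: averages of projections with many almost-orthogonal pairs
      (∀ (N : ℕ), 1 ≤ N → ∀ (P : Fin N → (E →L[ℂ] E)) (α δ : ℝ),
        0 ≤ α → α < 1 → 0 < δ → δ ≤ 1 →
        (∀ j, P j * P j = P j) →
        (∀ j, ContinuousLinearMap.adjoint (P j) = P j) →
        δ * (N : ℝ) ^ 2 ≤
          ((Finset.univ.filter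
            (fun q : Fin N × Fin N => ‖P q.1 * P q.2‖ ≤ α)).card : ℝ) →
        ‖(N : ℂ)⁻¹ • ∑ j, P j‖ ≤ 1 - δ / 2 * (1 - α)) ∧
      -- two-projection case: largest eigenvalue of (P+Q)/2 is at most (1+s)/2
      (∀ (P Q : E →L[ℂ] E),
        P * P = P → ContinuousLinearMap.adjoint P = P →
        Q * Q = Q → ContinuousLinearMap.adjoint Q = Q →
        ∀ μ : ℝ,
          Module.End.HasEigenvalue
            (((2 : ℂ)⁻¹ • (P + Q) : E →L[ℂ] E) : E →ₗ[ℂ] E) (μ : ℂ) →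
          μ ≤ (1 + ‖P * Q‖) / 2) := by
  intro E _ _ _
  refine ⟨?_, ?_⟩
  · intro N hN P α δ hα hα1 hδ hδ1 hP hPa hcard
    have hN0 : (0 : ℝ) < N := by exact_mod_cast hN
    have key : ∀ j l, ‖P j + P l‖ ≤ 1 + ‖P j * P l‖ := fun j l =>
      ContinuousLinearMap.opNorm_le_bound _ (by positivity) fun x =>
        two_proj_apply (P j) (P l) (hP j) (hPa j) (hP l) (hPa l) x
    have key2 : ∀ q : Fin N × Fin N,
        ‖P q.1 + P q.2‖ ≤ 2 - (if ‖P q.1 * P q.2‖ ≤ α then (1 - α) else 0) := by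
      intro q
      split_ifs with h
      · linarith [key q.1 q.2]
      · have := norm_add_le (P q.1) (P q.2)
        linarith [proj_norm_le_one _ (hP q.1) (hPa q.1), proj_norm_le_one _ (hP q.2) (hPa q.2)]
    have hsum : ∑ q : Fin N × Fin N, (P q.1 + P q.2) = (2 * (N : ℂ)) • ∑ j, P j := by
      rw [Fintype.sum_prod_type]
      simp only [Finset.sum_add_distrib, Finset.sum_const, Finset.card_univ, Fintype.card_fin]
      rw [← Finset.smul_sum, ← Nat.cast_smul_eq_nsmul ℂ, ← add_smul, two_mul]
    have hbound : 2 * (N : ℝ) * ‖∑ j, P j‖ ≤ 2 * (N : ℝ) ^ 2 - δ * (N : ℝ) ^ 2 * (1 - α) := by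
      calc 2 * (N : ℝ) * ‖∑ j, P j‖ = ‖∑ q : Fin N × Fin N, (P q.1 + P q.2)‖ := by
            rw [hsum, norm_smul]; simp
        _ ≤ ∑ q : Fin N × Fin N, ‖P q.1 + P q.2‖ := norm_sum_le _ _
        _ ≤ ∑ q : Fin N × Fin N, (2 - (if ‖P q.1 * P q.2‖ ≤ α then (1 - α) else 0)) :=
            Finset.sum_le_sum fun q _ => key2 q
        _ = 2 * (N : ℝ) ^ 2 - ((Finset.univ.filter
            (fun q : Fin N × Fin N => ‖P q.1 * P q.2‖ ≤ α)).card : ℝ) * (1 - α) := by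
            rw [Finset.sum_sub_distrib, ← Finset.sum_filter, Finset.sum_const, Finset.sum_const,
              nsmul_eq_mul, nsmul_eq_mul, Finset.card_univ, Fintype.card_prod, Fintype.card_fin]
            push_cast
            ring
        _ ≤ _ := by
            have := mul_le_mul_of_nonneg_right hcard (by linarith : 0 ≤ 1 - α)
            linarith
    rw [norm_smul, norm_inv, Complex.norm_natCast, inv_mul_le_iff₀ hN0]
    have h2 : (2 * (N : ℝ)) * ‖∑ j, P j‖ ≤ (2 * (N : ℝ)) * (N * (1 - δ / 2 * (1 - α))) := by
      nlinarith
    exact le_of_mul_le_mul_left h2 (by positivity)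
  · intro P Q hP hPa hQ hQa μ hμ
    obtain ⟨x, hx⟩ := hμ.exists_hasEigenvector
    have h0 : 0 < ‖x‖ := norm_pos_iff.mpr hx.2
    have h1 : (2 : ℂ)⁻¹ • (P x + Q x) = (μ : ℂ) • x := by
      have := hx.apply_eq_smul
      simpa using this
    have h2 := congrArg norm h1
    rw [norm_smul, norm_smul, norm_inv, Complex.norm_real, Complex.norm_ofNat,
      Real.norm_eq_abs] at h2
    have h3 := two_proj_apply P Q hP hPa hQ hQa x
    have h4 : μ * ‖x‖ ≤ (1 + ‖P * Q‖) / 2 * ‖x‖ := by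
      have := mul_le_mul_of_nonneg_right (le_abs_self μ) h0.le
      linarith
    exact le_of_mul_le_mul_right h4 h0
end
end

section
/- Let p be an odd prime, W an F_p-vector space of dimension 2m ≥ 2 with nondegenerate alternating form ω, and H the associated Heisenberg group. Fix β ∈ (1/p, 1). Let a_1,…,a_N ∈ H with a_j = (v_j, z_j), let μ_W = (1/N)·Σ_j δ_{v_j}, and assume μ_W(L) ≤ β for every hyperplane (codimension-one subspace) L ≤ W. Let ν = (1/N)·Σ_{j=1}^N u_{⟨a_j⟩}, where u_{⟨a⟩} is the uniform measure on the cyclic subgroup generated by a, and let K = (1/2)(R_ν + L_ν), where R_ν f(x) = Σ_g ν(g)f(xg) and L_ν f(x) = Σ_g ν(g)f(gx). Then K, which is self-adjoint on L²(H, uniform), satisfies: every eigenvalue of K on the orthogonal complement of the constant functions is at most 1 − γ_{p,β} in absolute value, where γ_{p,β} = min{ 1−β , ((1−β)²/2)·(1 − p^{−1/2}) } > 0; in particular the spectral gap of K is at least γ_{p,β}. -/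
noncomputable section

/-- Data of a bilinear form on `W` turning `W × ZMod p` into a Heisenberg group. -/
class HeisData (p : ℕ) (W : Type*) [Fact (Nat.Prime p)] [AddCommGroup W]
    [Module (ZMod p) W] where
  ω : W →ₗ[ZMod p] W →ₗ[ZMod p] ZMod p

/-- The Heisenberg group structure on `W × ZMod p`:
`(v,z)·(w,t) = (v+w, z+t+ω(v,w)/2)`. -/
instance heisGroup (p : ℕ) (W : Type*) [Fact (Nat.Prime p)] [AddCommGroup W]
    [Module (ZMod p) W] [HeisData p W] : Group (W × ZMod p) where
  mul x y := (x.1 + y.1, x.2 + y.2 + (2 : ZMod p)⁻¹ * HeisData.ω x.1 y.1)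
  one := ((0 : W), (0 : ZMod p))
  inv x := (-x.1, -x.2 + (2 : ZMod p)⁻¹ * HeisData.ω x.1 x.1)
  mul_assoc a b c := by
    refine Prod.ext ?_ ?_
    · show a.1 + b.1 + c.1 = a.1 + (b.1 + c.1)
      exact add_assoc _ _ _
    · show a.2 + b.2 + (2 : ZMod p)⁻¹ * HeisData.ω a.1 b.1 + c.2 +
          (2 : ZMod p)⁻¹ * HeisData.ω (a.1 + b.1) c.1 =
        a.2 + (b.2 + c.2 + (2 : ZMod p)⁻¹ * HeisData.ω b.1 c.1) +
          (2 : ZMod p)⁻¹ * HeisData.ω a.1 (b.1 + c.1)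
      simp only [map_add, LinearMap.add_apply]
      ring
  one_mul a := by
    refine Prod.ext ?_ ?_
    · show 0 + a.1 = a.1; simp
    · show 0 + a.2 + (2 : ZMod p)⁻¹ * HeisData.ω 0 a.1 = a.2
      simp
  mul_one a := by
    refine Prod.ext ?_ ?_
    · show a.1 + 0 = a.1; simp
    · show a.2 + 0 + (2 : ZMod p)⁻¹ * HeisData.ω a.1 0 = a.2
      simp
  inv_mul_cancel a := by
    refine Prod.ext ?_ ?_
    · show -a.1 + a.1 = 0; simp
    · show -a.2 + (2 : ZMod p)⁻¹ * HeisData.ω a.1 a.1 + a.2 +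
          (2 : ZMod p)⁻¹ * HeisData.ω (-a.1) a.1 = 0
      simp only [map_neg, LinearMap.neg_apply]
      ring

open scoped Classical

/-- The measure `ν = (1/N) Σ_j u_{⟨a_j⟩}`, where `u_{⟨a⟩}` is uniform on the
cyclic subgroup generated by `a`. -/
def heisNu {H : Type*} [Group H] {N : ℕ} (a : Fin N → H) : H → ℝ := fun g =>
  (1 / (N : ℝ)) * ∑ j,
    (if g ∈ Subgroup.zpowers (a j) then (Nat.card (Subgroup.zpowers (a j)) : ℝ)⁻¹ else 0)

/-- The kernel `K = (R_ν + L_ν)/2` as a matrix: `K x y = (ν(x⁻¹y) + ν(yx⁻¹))/2`. -/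
def heisK {H : Type*} [Group H] {N : ℕ} (a : Fin N → H) : H → H → ℝ := fun x y =>
  (heisNu a (x⁻¹ * y) + heisNu a (y * x⁻¹)) / 2

section helpers

variable {p : ℕ} [Fact (Nat.Prime p)] {W : Type} [AddCommGroup W] [Module (ZMod p) W]
  [HeisData p W]

theorem hz_mul (x y : W × ZMod p) :
    x * y = (x.1 + y.1, x.2 + y.2 + (2 : ZMod p)⁻¹ * HeisData.ω x.1 y.1) := rfl

theorem hz_one : (1 : W × ZMod p) = (0, 0) := rfl

theorem hz_inv (x : W × ZMod p) :
    x⁻¹ = (-x.1, -x.2 + (2 : ZMod p)⁻¹ * HeisData.ω x.1 x.1) := rfl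

theorem hz_skew (h0 : ∀ v : W, HeisData.ω (p := p) v v = 0) (v w : W) :
    HeisData.ω (p := p) v w = - HeisData.ω (p := p) w v := by
  have h := h0 (v + w)
  simp only [map_add, LinearMap.add_apply, h0] at h
  linear_combination h

def hE (a : W × ZMod p) (s : ZMod p) : W × ZMod p := (s • a.1, s * a.2)

theorem hE_add (h0 : ∀ v : W, HeisData.ω (p := p) v v = 0) (a : W × ZMod p) (s t : ZMod p) :
    hE a s * hE a t = hE a (s + t) := by
  simp [hz_mul, hE, h0, add_smul, add_mul]

theorem hE_zero (a : W × ZMod p) : hE a 0 = 1 := by simp [hE, hz_one]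

theorem hE_neg (h0 : ∀ v : W, HeisData.ω (p := p) v v = 0) (a : W × ZMod p) (s : ZMod p) :
    (hE a s)⁻¹ = hE a (-s) := by
  rw [inv_eq_iff_mul_eq_one, hE_add h0, add_neg_cancel, hE_zero]

theorem hE_pow (h0 : ∀ v : W, HeisData.ω (p := p) v v = 0) (a : W × ZMod p) (n : ℕ) :
    a ^ n = hE a n := by
  induction n with
  | zero => simp [hE_zero]
  | succ n ih =>
    rw [pow_succ, ih]
    have : a = hE a 1 := by simp [hE]
    conv_lhs => rw [this]
    have h2 : hE (hE a 1) (n : ZMod p) = hE a n := by rw [← this]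
    rw [h2, hE_add h0]; simp

theorem hE_mem (h0 : ∀ v : W, HeisData.ω (p := p) v v = 0) (a g : W × ZMod p) :
    g ∈ Subgroup.zpowers a ↔ ∃ s, hE a s = g := by
  constructor
  · rintro ⟨n, rfl⟩
    obtain ⟨k, rfl | rfl⟩ := n.eq_nat_or_neg
    · exact ⟨k, by simp [hE_pow h0]⟩
    · exact ⟨-k, by simp [hE_pow h0, hE_neg h0]⟩
  · rintro ⟨s, rfl⟩
    refine ⟨(s.val : ℤ), ?_⟩
    show a ^ (s.val : ℤ) = _
    rw [zpow_natCast, hE_pow h0, ZMod.natCast_zmod_val]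

theorem hE_inj (a : W × ZMod p) (ha : a ≠ 1) : Function.Injective (hE a) := by
  intro s t h
  by_contra hst
  apply ha
  have hne : s - t ≠ 0 := sub_ne_zero.mpr hst
  simp only [hE, Prod.mk.injEq] at h
  have h1 : (s - t) • a.1 = 0 := by rw [sub_smul, h.1, sub_self]
  have h2 : (s - t) * a.2 = 0 := by rw [sub_mul, h.2, sub_self]
  rw [hz_one]
  exact Prod.ext ((smul_eq_zero.mp h1).resolve_left hne) ((mul_eq_zero.mp h2).resolve_left hne)

theorem hE_count (h0 : ∀ v : W, HeisData.ω (p := p) v v = 0) (a g : W × ZMod p) :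
    (if g ∈ Subgroup.zpowers a then (Nat.card (Subgroup.zpowers a) : ℝ)⁻¹ else 0)
      = (p : ℝ)⁻¹ * ∑ s : ZMod p, if hE a s = g then (1 : ℝ) else 0 := by
  have hp : (p : ℝ) ≠ 0 := by exact_mod_cast (Fact.out : p.Prime).ne_zero
  by_cases ha : a = 1
  · subst ha
    have : ∀ s, hE (1 : W × ZMod p) s = 1 := by intro s; simp [hE, hz_one]
    simp only [this, Subgroup.zpowers_one_eq_bot, Subgroup.mem_bot, Finset.sum_const,
      Finset.card_univ, ZMod.card]
    by_cases hg : g = 1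
    · subst hg; simp [hp]
    · simp [hg, Ne.symm hg]
  · have hinj := hE_inj a ha
    have hcard : Nat.card (Subgroup.zpowers a) = p := by
      have : Nat.card (ZMod p) = Nat.card (Subgroup.zpowers a) := by
        refine Nat.card_congr (Equiv.ofBijective
          (fun s => (⟨hE a s, (hE_mem h0 a _).2 ⟨s, rfl⟩⟩ : Subgroup.zpowers a)) ⟨?_, ?_⟩)
        · intro s t h; exact hinj (by simpa using h)
        · rintro ⟨g, hg⟩
          obtain ⟨s, hs⟩ := (hE_mem h0 a g).1 hg
          exact ⟨s, Subtype.ext hs⟩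
      rw [← this]; simp
    rw [hcard]
    by_cases hg : g ∈ Subgroup.zpowers a
    · obtain ⟨s, rfl⟩ := (hE_mem h0 a g).1 hg
      simp only [hg, if_true, hinj.eq_iff]
      simp
    · rw [if_neg hg, Finset.sum_eq_zero]; · simp
      intro s _
      rw [if_neg]
      intro h; exact hg ((hE_mem h0 a g).2 ⟨s, h⟩)

variable [Fintype W]

def hP (a : W × ZMod p) (f : W × ZMod p → ℝ) (x : W × ZMod p) : ℝ :=
  (p : ℝ)⁻¹ * ∑ s : ZMod p, f (x * hE a s)

def hL (a : W × ZMod p) (f : W × ZMod p → ℝ) (x : W × ZMod p) : ℝ :=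
  (p : ℝ)⁻¹ * ∑ s : ZMod p, f (hE a s * x)

theorem hK_eq (h0 : ∀ v : W, HeisData.ω (p := p) v v = 0) {N : ℕ} (a : Fin N → W × ZMod p)
    (f : W × ZMod p → ℝ) (x : W × ZMod p) :
    ∑ y, heisK a x y * f y = (1 / (N : ℝ)) * ∑ j, (hP (a j) f x + hL (a j) f x) / 2 := by
  have key : ∀ (e : W × ZMod p ≃ W × ZMod p),
      ∑ y, heisNu a (e y) * f y
        = (1 / (N : ℝ)) * ∑ j, (p : ℝ)⁻¹ * ∑ s : ZMod p, f (e.symm (hE (a j) s)) := by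
    intro e
    simp only [heisNu, hE_count h0]
    have : ∀ y, 1 / (N : ℝ) * (∑ j, (p : ℝ)⁻¹ * ∑ s : ZMod p,
        if hE (a j) s = e y then (1 : ℝ) else 0) * f y
        = 1 / (N : ℝ) * ∑ j, (p : ℝ)⁻¹ * ∑ s : ZMod p,
          (if hE (a j) s = e y then (1 : ℝ) else 0) * f y := by
      intro y
      rw [mul_assoc, Finset.sum_mul]
      simp only [mul_assoc, Finset.sum_mul]
    rw [Finset.sum_congr rfl fun y _ => this y, ← Finset.mul_sum, Finset.sum_comm]
    congr 1
    refine Finset.sum_congr rfl fun j _ => ?_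
    rw [← Finset.mul_sum, Finset.sum_comm]
    congr 1
    refine Finset.sum_congr rfl fun s _ => ?_
    rw [Finset.sum_eq_single (e.symm (hE (a j) s))]
    · simp
    · intro y _ hy
      rw [if_neg, zero_mul]
      intro h; apply hy; rw [h]; simp
    · simp
  have k1 := key (Equiv.mulLeft x⁻¹)
  have k2 := key (Equiv.mulRight x⁻¹)
  simp only [Equiv.coe_mulLeft, Equiv.coe_mulRight] at k1 k2
  have : ∑ y, heisK a x y * f y
      = (∑ y, heisNu a (x⁻¹ * y) * f y + ∑ y, heisNu a (y * x⁻¹) * f y) / 2 := by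
    rw [← Finset.sum_add_distrib, Finset.sum_div]
    refine Finset.sum_congr rfl fun y _ => ?_
    simp only [heisK]; ring
  rw [this, k1, k2, ← Finset.sum_div, Finset.sum_add_distrib]
  simp only [hP, hL, Equiv.mulLeft_symm, Equiv.mulRight_symm, inv_inv, Equiv.coe_mulLeft,
    Equiv.coe_mulRight]
  ring

/-! Fourier part -/

def hF (f : W × ZMod p → ℝ) (w : W) : ℂ :=
  ∑ x : W × ZMod p, (f x : ℂ) * ZMod.stdAddChar (HeisData.ω (p := p) w x.1)

theorem hF_sum (τ : ZMod p) :
    ∑ s : ZMod p, ZMod.stdAddChar (-(s * τ)) = if τ = 0 then (p : ℂ) else 0 := by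
  have := AddChar.sum_mulShift (R := ZMod p) (R' := ℂ) (-τ) (ZMod.isPrimitive_stdAddChar p)
  simpa using this

theorem hF_P (f : W × ZMod p → ℝ) (a : W × ZMod p) (w : W) :
    hF (hP a f) w = if HeisData.ω (p := p) w a.1 = 0 then hF f w else 0 := by
  have hp : (p : ℂ) ≠ 0 := by exact_mod_cast (Fact.out : p.Prime).ne_zero
  have h1 : hF (hP a f) w = (p : ℂ)⁻¹ * ∑ s : ZMod p,
      ∑ x : W × ZMod p, (f (x * hE a s) : ℂ) * ZMod.stdAddChar (HeisData.ω (p := p) w x.1) := by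
    rw [Finset.sum_comm, Finset.mul_sum]
    refine Finset.sum_congr rfl fun x _ => ?_
    simp only [hP]; push_cast; rw [mul_assoc, Finset.sum_mul]
  have h2 : ∀ s : ZMod p,
      ∑ x : W × ZMod p, (f (x * hE a s) : ℂ) * ZMod.stdAddChar (HeisData.ω (p := p) w x.1)
        = ZMod.stdAddChar (-(s * HeisData.ω (p := p) w a.1)) * hF f w := by
    intro s
    rw [hF, Finset.mul_sum, ← Equiv.sum_comp (Equiv.mulRight (hE a s)) (fun x =>
      ZMod.stdAddChar (-(s * HeisData.ω (p := p) w a.1)) *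
        ((f x : ℂ) * ZMod.stdAddChar (HeisData.ω (p := p) w x.1)))]
    refine Finset.sum_congr rfl fun x _ => ?_
    have : HeisData.ω (p := p) w x.1
        = -(s * HeisData.ω (p := p) w a.1) + HeisData.ω (p := p) w (x * hE a s).1 := by
      simp [hz_mul, hE]
    rw [this, AddChar.map_add_eq_mul]
    simp only [Equiv.coe_mulRight]; ring
  rw [h1]
  simp only [h2]
  rw [← Finset.sum_mul, hF_sum]
  split_ifs <;> simp [hp]

theorem hF_L (f : W × ZMod p → ℝ) (a : W × ZMod p) (w : W) :
    hF (hL a f) w = if HeisData.ω (p := p) w a.1 = 0 then hF f w else 0 := by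
  have hp : (p : ℂ) ≠ 0 := by exact_mod_cast (Fact.out : p.Prime).ne_zero
  have h1 : hF (hL a f) w = (p : ℂ)⁻¹ * ∑ s : ZMod p,
      ∑ x : W × ZMod p, (f (hE a s * x) : ℂ) * ZMod.stdAddChar (HeisData.ω (p := p) w x.1) := by
    rw [Finset.sum_comm, Finset.mul_sum]
    refine Finset.sum_congr rfl fun x _ => ?_
    simp only [hL]; push_cast; rw [mul_assoc, Finset.sum_mul]
  have h2 : ∀ s : ZMod p,
      ∑ x : W × ZMod p, (f (hE a s * x) : ℂ) * ZMod.stdAddChar (HeisData.ω (p := p) w x.1)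
        = ZMod.stdAddChar (-(s * HeisData.ω (p := p) w a.1)) * hF f w := by
    intro s
    rw [hF, Finset.mul_sum, ← Equiv.sum_comp (Equiv.mulLeft (hE a s)) (fun x =>
      ZMod.stdAddChar (-(s * HeisData.ω (p := p) w a.1)) *
        ((f x : ℂ) * ZMod.stdAddChar (HeisData.ω (p := p) w x.1)))]
    refine Finset.sum_congr rfl fun x _ => ?_
    have : HeisData.ω (p := p) w x.1
        = -(s * HeisData.ω (p := p) w a.1) + HeisData.ω (p := p) w (hE a s * x).1 := by
      simp [hz_mul, hE]
    rw [this, AddChar.map_add_eq_mul]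
    simp only [Equiv.coe_mulLeft]; ring
  rw [h1]
  simp only [h2]
  rw [← Finset.sum_mul, hF_sum]
  split_ifs <;> simp [hp]

theorem hF_sumW (h0 : ∀ v : W, HeisData.ω (p := p) v v = 0)
    (hnd : ∀ v : W, (∀ w : W, HeisData.ω (p := p) v w = 0) → v = 0) (u : W) (hu : u ≠ 0) :
    ∑ w : W, (ZMod.stdAddChar (HeisData.ω (p := p) w u) : ℂ) = 0 := by
  have := AddChar.sum_eq_zero_of_ne_one (R := W) (R' := ℂ)
    (ψ := (ZMod.stdAddChar (N := p)).compAddMonoidHom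
      ((HeisData.ω (p := p)).flip u).toAddMonoidHom) ?_
  · simpa using this
  · intro h
    apply hu
    apply hnd
    intro w
    have h3 := DFunLike.congr_fun h w
    have h4 : (ZMod.stdAddChar (HeisData.ω (p := p) w u) : ℂ) = ZMod.stdAddChar (0 : ZMod p) := by
      simpa using h3
    rw [hz_skew h0, ZMod.injective_stdAddChar h4, neg_zero]

theorem hF_inv (h0 : ∀ v : W, HeisData.ω (p := p) v v = 0)
    (hnd : ∀ v : W, (∀ w : W, HeisData.ω (p := p) v w = 0) → v = 0)
    (f : W × ZMod p → ℝ) (hf : ∀ w, hF f w = 0) (v : W) : ∑ z, f (v, z) = 0 := by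
  have h1 : ∑ w : W, (ZMod.stdAddChar (-(HeisData.ω (p := p) w v)) : ℂ) * hF f w = 0 := by
    simp [hf]
  have h2 : ∑ w : W, (ZMod.stdAddChar (-(HeisData.ω (p := p) w v)) : ℂ) * hF f w
      = ∑ x : W × ZMod p, (f x : ℂ) *
        ∑ w : W, (ZMod.stdAddChar (HeisData.ω (p := p) w (x.1 - v)) : ℂ) := by
    simp only [hF, Finset.mul_sum]
    rw [Finset.sum_comm]
    refine Finset.sum_congr rfl fun x _ => Finset.sum_congr rfl fun w _ => ?_
    rw [map_sub, sub_eq_add_neg, AddChar.map_add_eq_mul]; ring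
  have h3 : ∀ u : W, ∑ w : W, (ZMod.stdAddChar (HeisData.ω (p := p) w u) : ℂ)
      = if u = 0 then (Fintype.card W : ℂ) else 0 := by
    intro u
    split_ifs with hu
    · simp [hu]
    · exact hF_sumW h0 hnd u hu
  rw [h2] at h1
  simp only [h3, sub_eq_zero] at h1
  rw [Fintype.sum_prod_type, Finset.sum_eq_single v] at h1
  · simp only [if_true, ← Finset.sum_mul] at h1
    have h5 : (Fintype.card W : ℂ) ≠ 0 := by
      exact_mod_cast (Fintype.card_pos_iff.2 ⟨(0 : W)⟩).ne'
    have := (mul_eq_zero.mp h1).resolve_right h5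
    exact_mod_cast this
  · intro b _ hb; simp [hb]
  · simp

/-! Quadratic form part -/

theorem hP_inv (h0 : ∀ v : W, HeisData.ω (p := p) v v = 0) (a : W × ZMod p)
    (f : W × ZMod p → ℝ) (x : W × ZMod p) (t : ZMod p) : hP a f (x * hE a t) = hP a f x := by
  simp only [hP]
  congr 1
  rw [← Equiv.sum_comp (Equiv.addLeft t) (fun s => f (x * hE a s))]
  simp [mul_assoc, hE_add h0]

theorem hP_sa (h0 : ∀ v : W, HeisData.ω (p := p) v v = 0) (a : W × ZMod p)
    (f g : W × ZMod p → ℝ) : ∑ x, hP a f x * g x = ∑ x, f x * hP a g x := by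
  simp only [hP, mul_assoc, Finset.sum_mul, Finset.mul_sum]
  rw [Finset.sum_comm]
  conv_rhs => rw [Finset.sum_comm]
  rw [← Equiv.sum_comp (Equiv.neg (ZMod p))]
  refine Finset.sum_congr rfl fun s _ => ?_
  rw [← Equiv.sum_comp (Equiv.mulRight (hE a s))]
  refine Finset.sum_congr rfl fun x _ => ?_
  simp only [Equiv.coe_mulRight, Equiv.neg_apply, mul_assoc, hE_add h0, add_neg_cancel, hE_zero,
    mul_one]
  ring

theorem hP_idem (h0 : ∀ v : W, HeisData.ω (p := p) v v = 0) (a : W × ZMod p)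
    (f : W × ZMod p → ℝ) : hP a (hP a f) = hP a f := by
  have hp : (p : ℝ) ≠ 0 := by exact_mod_cast (Fact.out : p.Prime).ne_zero
  funext x
  conv_lhs => rw [hP]
  simp only [hP_inv h0]
  simp [hp]

theorem hP_quad (h0 : ∀ v : W, HeisData.ω (p := p) v v = 0) (a : W × ZMod p)
    (f : W × ZMod p → ℝ) : ∑ x, hP a f x * f x = ∑ x, hP a f x * hP a f x := by
  conv_lhs => rw [← hP_idem h0]
  rw [hP_sa h0]

theorem hP_center (a : W × ZMod p)
    (f : W × ZMod p → ℝ) (hf : ∀ v, ∑ z, f (v, z) = 0) (v : W) : ∑ z, hP a f (v, z) = 0 := by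
  simp only [hP, ← Finset.mul_sum]
  rw [Finset.sum_comm, Finset.sum_eq_zero, mul_zero]
  intro s _
  rw [← hf (v + s • a.1),
    ← Equiv.sum_comp (Equiv.addRight (s * a.2 + (2 : ZMod p)⁻¹ * HeisData.ω v (s • a.1)))
      (fun z => f (v + s • a.1, z))]
  simp [hz_mul, hE, add_assoc]

theorem hP_orth (h0 : ∀ v : W, HeisData.ω (p := p) v v = 0) (hp2 : p ≠ 2) (a g : W × ZMod p)
    (hag : HeisData.ω (p := p) a.1 g.1 ≠ 0)
    (u : W × ZMod p → ℝ) (hu : ∀ v, ∑ z, u (v, z) = 0) (hinv : ∀ x t, u (x * hE a t) = u x) :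
    ∑ x, u (x * g) * u x = 0 := by
  have hp : (p : ℝ) ≠ 0 := by exact_mod_cast (Fact.out : p.Prime).ne_zero
  have h2 : (2 : ZMod p) ≠ 0 := by
    exact Ring.two_ne_zero (by rw [ZMod.ringChar_zmod_n]; exact hp2)
  have h1 : ∀ s : ZMod p, ∑ x, u (x * g) * u x
      = ∑ x, u ((x * g).1, (x * g).2 + s * HeisData.ω (p := p) a.1 g.1) * u x := by
    intro s
    rw [← Equiv.sum_comp (Equiv.mulRight (hE a s)) (fun x => u (x * g) * u x)]
    refine Finset.sum_congr rfl fun x _ => ?_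
    simp only [Equiv.coe_mulRight, hinv]
    congr 1
    rw [← hinv ((x * g).1, (x * g).2 + s * HeisData.ω (p := p) a.1 g.1) s]
    congr 1
    refine Prod.ext ?_ ?_
    · simp only [hz_mul, hE]; abel
    · simp only [hz_mul, hE, map_add, LinearMap.add_apply, map_smul, LinearMap.smul_apply,
        smul_eq_mul]
      rw [hz_skew h0 g.1 a.1]
      field_simp
      ring
  have h3 : ∑ s : ZMod p, ∑ x, u (x * g) * u x = 0 := by
    rw [Finset.sum_congr rfl fun s _ => h1 s, Finset.sum_comm]
    refine Finset.sum_eq_zero fun x _ => ?_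
    rw [← Finset.sum_mul]
    have := hu (x * g).1
    rw [← Equiv.sum_comp ((Equiv.mulRight₀ _ hag).trans (Equiv.addLeft (x * g).2))] at this
    simp only [Equiv.trans_apply, Equiv.mulRight₀_apply, Equiv.coe_addLeft] at this
    rw [this, zero_mul]
  simpa [hp] using h3

theorem hP_pair (h0 : ∀ v : W, HeisData.ω (p := p) v v = 0) (hp2 : p ≠ 2) (a b : W × ZMod p)
    (hab : HeisData.ω (p := p) a.1 b.1 ≠ 0)
    (f : W × ZMod p → ℝ) (hf : ∀ v, ∑ z, f (v, z) = 0) :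
    ∑ x, hP b (hP a f) x * hP b (hP a f) x = (p : ℝ)⁻¹ * ∑ x, hP a f x * hP a f x := by
  set u := hP a f with hu
  rw [← hP_quad h0]
  have h1 : ∑ x, hP b u x * u x = (p : ℝ)⁻¹ * ∑ s : ZMod p, ∑ x, u (x * hE b s) * u x := by
    rw [Finset.sum_comm, Finset.mul_sum]
    refine Finset.sum_congr rfl fun x _ => ?_
    simp only [hP]; rw [mul_assoc, Finset.sum_mul]
  rw [h1, Finset.sum_eq_single 0]
  · simp [hE_zero]
  · intro s _ hs
    apply hP_orth h0 hp2 a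
    · simp [hE, hs, hab]
    · exact hP_center a f hf
    · exact hP_inv h0 a f
  · simp

theorem hQ_nonneg (h0 : ∀ v : W, HeisData.ω (p := p) v v = 0) (a : W × ZMod p)
    (f : W × ZMod p → ℝ) : 0 ≤ ∑ x, hP a f x * f x := by
  rw [hP_quad h0]; exact Finset.sum_nonneg fun x _ => mul_self_nonneg _

theorem hQ_le (h0 : ∀ v : W, HeisData.ω (p := p) v v = 0) (a : W × ZMod p)
    (f : W × ZMod p → ℝ) : ∑ x, hP a f x * f x ≤ ∑ x, f x * f x := by
  have h := hP_quad h0 a f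
  have h2 : 0 ≤ ∑ x, (f x - hP a f x) * (f x - hP a f x) :=
    Finset.sum_nonneg fun x _ => mul_self_nonneg _
  have h3 : ∑ x, (f x - hP a f x) * (f x - hP a f x)
      = ∑ x, f x * f x - 2 * ∑ x, hP a f x * f x + ∑ x, hP a f x * hP a f x := by
    rw [Finset.mul_sum, ← Finset.sum_sub_distrib, ← Finset.sum_add_distrib]
    exact Finset.sum_congr rfl fun x _ => by ring
  linarith

theorem hQ_pair (h0 : ∀ v : W, HeisData.ω (p := p) v v = 0) (hp2 : p ≠ 2) (a b : W × ZMod p)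
    (hab : HeisData.ω (p := p) a.1 b.1 ≠ 0)
    (f : W × ZMod p → ℝ) (hf : ∀ v, ∑ z, f (v, z) = 0) (r : ℝ) (hr : 0 < r)
    (hr2 : r * r = (p : ℝ)⁻¹) :
    ∑ x, hP a f x * f x + ∑ x, hP b f x * f x ≤ (1 + r) * ∑ x, f x * f x := by
  have hA := hP_quad h0 a f
  have hB := hP_quad h0 b f
  have hC := hP_pair h0 hp2 a b hab f hf
  have hD : ∑ x, hP a f x * hP b f x = ∑ x, hP b (hP a f) x * hP b f x := by
    conv_lhs => rw [← hP_idem h0 b]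
    rw [← hP_sa h0]
  have e1 : 0 ≤ ∑ x, (hP b (hP a f) x - r * hP b f x) * (hP b (hP a f) x - r * hP b f x) :=
    Finset.sum_nonneg fun x _ => mul_self_nonneg _
  have e2 : ∑ x, (hP b (hP a f) x - r * hP b f x) * (hP b (hP a f) x - r * hP b f x)
      = ∑ x, hP b (hP a f) x * hP b (hP a f) x - 2 * r * ∑ x, hP b (hP a f) x * hP b f x
        + r * r * ∑ x, hP b f x * hP b f x := by
    rw [Finset.mul_sum, Finset.mul_sum, ← Finset.sum_sub_distrib, ← Finset.sum_add_distrib]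
    exact Finset.sum_congr rfl fun x _ => by ring
  have e3 : 0 ≤ ∑ x, (hP a f x + hP b f x - (1 + r) * f x) *
      (hP a f x + hP b f x - (1 + r) * f x) :=
    Finset.sum_nonneg fun x _ => mul_self_nonneg _
  have e4 : ∑ x, (hP a f x + hP b f x - (1 + r) * f x) *
      (hP a f x + hP b f x - (1 + r) * f x)
      = ∑ x, hP a f x * hP a f x + ∑ x, hP b f x * hP b f x + 2 * ∑ x, hP a f x * hP b f x
        - 2 * (1 + r) * ∑ x, hP a f x * f x - 2 * (1 + r) * ∑ x, hP b f x * f x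
        + (1 + r) * (1 + r) * ∑ x, f x * f x := by
    simp only [Finset.mul_sum, ← Finset.sum_sub_distrib, ← Finset.sum_add_distrib]
    exact Finset.sum_congr rfl fun x _ => by ring
  rw [e2, ← hD, hC, ← hr2] at e1
  rw [e4] at e3
  rw [← hA, ← hB] at e3
  rw [← hA, ← hB] at e1
  set A := ∑ x, hP a f x * f x
  set B := ∑ x, hP b f x * f x
  set M := ∑ x, f x * f x
  set D := ∑ x, hP a f x * hP b f x
  have e5 : 2 * D ≤ r * (A + B) := by
    have : 0 ≤ r * (r * (A + B) - 2 * D) := by linarith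
    have := nonneg_of_mul_nonneg_right this hr
    linarith
  have e6 : 0 ≤ (1 + r) * ((1 + r) * M - (A + B)) := by linarith
  have := nonneg_of_mul_nonneg_right e6 (by linarith)
  linarith

theorem hQ_avg (h0 : ∀ v : W, HeisData.ω (p := p) v v = 0)
    (hnd : ∀ v : W, (∀ w : W, HeisData.ω (p := p) v w = 0) → v = 0)
    (hp2 : p ≠ 2) [Nontrivial W] (β : ℝ) (hβ : β < 1) (N : ℕ) (hN : 1 ≤ N)
    (a : Fin N → W × ZMod p)
    (ha : ∀ ξ : W →ₗ[ZMod p] ZMod p, ξ ≠ 0 →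
          ((Finset.univ.filter fun j => ξ (a j).1 = 0).card : ℝ) / N ≤ β)
    (f : W × ZMod p → ℝ) (hf : ∀ v, ∑ z, f (v, z) = 0) (r : ℝ) (hr : 0 < r) (hr1 : r ≤ 1)
    (hr2 : r * r = (p : ℝ)⁻¹) :
    (1 / (N : ℝ)) * ∑ j, ∑ x, hP (a j) f x * f x
      ≤ (1 - (1 - β) ^ 2 / 2 * (1 - r)) * ∑ x, f x * f x := by
  have hN' : (0 : ℝ) < N := by exact_mod_cast hN
  set M := ∑ x, f x * f x with hM
  have hM0 : 0 ≤ M := Finset.sum_nonneg fun x _ => mul_self_nonneg _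
  set Q : Fin N → ℝ := fun j => ∑ x, hP (a j) f x * f x with hQ
  have hcount : ∀ ξ : W →ₗ[ZMod p] ZMod p, ξ ≠ 0 →
      (1 - β) * N ≤ ((Finset.univ.filter fun j => ξ (a j).1 ≠ 0).card : ℝ) := by
    intro ξ hξ
    have h1 := ha ξ hξ
    rw [div_le_iff₀ hN'] at h1
    have h2 := Finset.card_filter_add_card_filter_not (s := (Finset.univ : Finset (Fin N)))
      (fun j => ξ (a j).1 = 0)
    have h3 : ((Finset.univ.filter fun j => ξ (a j).1 = 0).card : ℝ)
      + ((Finset.univ.filter fun j => ¬ ξ (a j).1 = 0).card : ℝ) = N := by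
      rw [← Nat.cast_add]
      rw [h2]; simp
    simp only [ne_eq]
    linarith
  have hωne : ∀ w : W, w ≠ 0 → HeisData.ω (p := p) w ≠ 0 := by
    intro w hw h
    exact hw (hnd w fun v => by rw [h]; rfl)
  have hpair : ∀ j k, Q j + Q k ≤ 2 * M -
      (if HeisData.ω (p := p) (a j).1 (a k).1 ≠ 0 then (1 - r) * M else 0) := by
    intro j k
    split_ifs with h
    · have := hQ_pair h0 hp2 (a j) (a k) h f hf r hr hr2
      simp only [hQ]; linarith
    · have h1 := hQ_le h0 (a j) f
      have h2 := hQ_le h0 (a k) f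
      simp only [hQ]; linarith
  have hrow : ∀ j, ∑ k, (Q j + Q k) ≤ 2 * M * N -
      (if (a j).1 ≠ 0 then (1 - β) * N * ((1 - r) * M) else 0) := by
    intro j
    refine (Finset.sum_le_sum fun k _ => hpair j k).trans ?_
    rw [Finset.sum_sub_distrib, Finset.sum_ite, Finset.sum_const_zero, add_zero]
    simp only [Finset.sum_const, nsmul_eq_mul, Finset.card_univ, Fintype.card_fin]
    have hs : 0 ≤ (1 - r) * M := mul_nonneg (by linarith) hM0
    split_ifs with h
    · have := mul_le_mul_of_nonneg_right (hcount _ (hωne _ h)) hs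
      linarith
    · have : 0 ≤ ((Finset.univ.filter fun k =>
        HeisData.ω (p := p) (a j).1 (a k).1 ≠ 0).card : ℝ) * ((1 - r) * M) := by positivity
      linarith
  have htot : ∑ j, ∑ k, (Q j + Q k) ≤ 2 * M * N * N -
      (1 - β) * N * ((1 - β) * N * ((1 - r) * M)) := by
    refine (Finset.sum_le_sum fun j _ => hrow j).trans ?_
    rw [Finset.sum_sub_distrib, Finset.sum_ite, Finset.sum_const_zero, add_zero]
    simp only [Finset.sum_const, nsmul_eq_mul, Finset.card_univ, Fintype.card_fin]
    have hs : 0 ≤ (1 - β) * N * ((1 - r) * M) :=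
      mul_nonneg (mul_nonneg (by linarith) hN'.le) (mul_nonneg (by linarith) hM0)
    obtain ⟨w, hw⟩ := exists_ne (0 : W)
    have h1 := hcount _ (hωne w hw)
    have h2 : ((Finset.univ.filter fun j => HeisData.ω (p := p) w (a j).1 ≠ 0).card : ℝ)
        ≤ ((Finset.univ.filter fun j => (a j).1 ≠ 0).card : ℝ) := by
      norm_cast
      refine Finset.card_le_card fun j => ?_
      simp only [Finset.mem_filter, Finset.mem_univ, true_and]
      intro h h'; apply h; rw [h', map_zero]
    have := mul_le_mul_of_nonneg_right (h1.trans h2) hs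
    linarith
  have hlhs : ∑ j, ∑ k, (Q j + Q k) = 2 * N * ∑ j, Q j := by
    simp only [Finset.sum_add_distrib, Finset.sum_const, nsmul_eq_mul, Finset.card_univ,
      Fintype.card_fin, ← Finset.mul_sum]
    ring
  rw [hlhs] at htot
  rw [one_div, inv_mul_le_iff₀ hN']
  have : 0 ≤ (2 * N) * (N * ((1 - (1 - β) ^ 2 / 2 * (1 - r)) * M) - ∑ j, Q j) := by
    linarith
  have := nonneg_of_mul_nonneg_right this (by positivity)
  linarith

theorem hL_quad (h0 : ∀ v : W, HeisData.ω (p := p) v v = 0) (a : W × ZMod p)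
    (f : W × ZMod p → ℝ) :
    ∑ x, hL a f x * f x = ∑ x, hP a (fun y => f y⁻¹) x * (fun y => f y⁻¹) x := by
  rw [← Equiv.sum_comp (Equiv.inv (W × ZMod p))]
  refine Finset.sum_congr rfl fun x _ => ?_
  simp only [Equiv.inv_apply, hL, hP]
  congr 2
  rw [← Equiv.sum_comp (Equiv.neg (ZMod p))]
  simp [hE_neg h0]

theorem hcenter_inv (h0 : ∀ v : W, HeisData.ω (p := p) v v = 0)
    (f : W × ZMod p → ℝ) (hf : ∀ v, ∑ z, f (v, z) = 0) (v : W) :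
    ∑ z : ZMod p, f (v, z)⁻¹ = 0 := by
  rw [← hf (-v), ← Equiv.sum_comp (Equiv.neg (ZMod p))]
  simp [hz_inv, h0]

end helpers

theorem stmt17 :
    ∀ (p : ℕ) [Fact (Nat.Prime p)], p ≠ 2 →
    ∀ (W : Type) [AddCommGroup W] [Module (ZMod p) W] [Fintype W] [DecidableEq W]
      [HeisData p W] (m : ℕ),
      1 ≤ m → Module.finrank (ZMod p) W = 2 * m →
      -- ω is alternating and nondegenerate
      (∀ v : W, HeisData.ω (p := p) v v = 0) →
      (∀ v : W, (∀ w : W, HeisData.ω (p := p) v w = 0) → v = 0) →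
      ∀ β : ℝ, 1 / (p : ℝ) < β → β < 1 →
      ∀ (N : ℕ), 1 ≤ N → ∀ a : Fin N → W × ZMod p,
        -- the empirical measure of the horizontal parts puts mass at most β
        -- on every hyperplane (= kernel of a nonzero linear functional)
        (∀ ξ : W →ₗ[ZMod p] ZMod p, ξ ≠ 0 →
          ((Finset.univ.filter fun j => ξ (a j).1 = 0).card : ℝ) / N ≤ β) →
        -- every eigenvalue of K on the orthogonal complement of the constants
        -- is at most 1 − γ_{p,β} in absolute value
        ∀ (f : W × ZMod p → ℝ) (c : ℝ),
          (fun x => ∑ y, heisK a x y * f y) = c • f →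
          (∑ x, f x) = 0 → f ≠ 0 →
          |c| ≤ 1 - min (1 - β) ((1 - β) ^ 2 / 2 * (1 - (p : ℝ) ^ (-(1 / 2 : ℝ)))) := by
  intro p _ hp2 W _ _ _ _ _ m hm hdim h0 hnd β hβ1 hβ N hN a ha f c hK hsum hf
  have hN' : (0 : ℝ) < N := by exact_mod_cast hN
  have hp : (1 : ℝ) < p := by exact_mod_cast (Fact.out : p.Prime).one_lt
  have : Nontrivial W := Module.nontrivial_of_finrank_pos (R := ZMod p) (by omega)
  have hKx : ∀ x, (1 / (N : ℝ)) * ∑ j, (hP (a j) f x + hL (a j) f x) / 2 = c * f x := by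
    intro x
    rw [← hK_eq h0]
    exact congrFun hK x
  set r : ℝ := (p : ℝ) ^ (-(1 / 2 : ℝ)) with hr
  have hr0 : 0 < r := Real.rpow_pos_of_pos (by linarith) _
  have hr1 : r ≤ 1 := Real.rpow_le_one_of_one_le_of_nonpos hp.le (by norm_num)
  have hr2 : r * r = (p : ℝ)⁻¹ := by
    rw [hr, ← Real.rpow_add (by linarith)]
    norm_num
    rw [Real.rpow_neg_one]
  by_cases hFz : ∀ w, hF f w = 0
  · have hc := hF_inv h0 hnd f hFz
    have h1 := hQ_avg h0 hnd hp2 β hβ N hN a ha f hc r hr0 hr1 hr2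
    have h2 := hQ_avg h0 hnd hp2 β hβ N hN a ha (fun y => f y⁻¹) (hcenter_inv h0 f hc)
      r hr0 hr1 hr2
    have hinv : ∑ x : W × ZMod p, f x⁻¹ * f x⁻¹ = ∑ x, f x * f x :=
      Equiv.sum_comp (Equiv.inv (W × ZMod p)) (fun x => f x * f x)
    rw [hinv] at h2
    have h1' : 0 ≤ (1 / (N : ℝ)) * ∑ j, ∑ x, hP (a j) f x * f x :=
      mul_nonneg (by positivity) (Finset.sum_nonneg fun j _ => hQ_nonneg h0 _ _)
    have h2' : 0 ≤ (1 / (N : ℝ)) * ∑ j, ∑ x, hP (a j) (fun y => f y⁻¹) x * f x⁻¹ :=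
      mul_nonneg (by positivity) (Finset.sum_nonneg fun j _ => hQ_nonneg h0 _ _)
    have hM : 0 < ∑ x, f x * f x := by
      obtain ⟨x, hx⟩ := Function.ne_iff.mp hf
      exact Finset.sum_pos' (fun x _ => mul_self_nonneg _)
        ⟨x, Finset.mem_univ _, mul_self_pos.mpr hx⟩
    have hq : c * ∑ x, f x * f x = ((1 / (N : ℝ)) * ∑ j, ∑ x, hP (a j) f x * f x
        + (1 / (N : ℝ)) * ∑ j, ∑ x, hP (a j) (fun y => f y⁻¹) x * f x⁻¹) / 2 := by
      have e : ∀ j, ∑ x, hP (a j) (fun y => f y⁻¹) x * f x⁻¹ = ∑ x, hL (a j) f x * f x :=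
        fun j => (hL_quad h0 (a j) f).symm
      simp only [e]
      rw [← mul_add, ← Finset.sum_add_distrib]
      simp only [← Finset.sum_add_distrib]
      rw [Finset.sum_comm, mul_div_assoc, Finset.sum_div, Finset.mul_sum, Finset.mul_sum]
      refine Finset.sum_congr rfl fun x _ => ?_
      rw [← mul_assoc, ← hKx x, mul_assoc, Finset.sum_mul, Finset.sum_div]
      congr 1
      exact Finset.sum_congr rfl fun j _ => by ring
    have hc0 : 0 ≤ c := by
      by_contra h
      push Not at h
      nlinarith
    have hc1 : c ≤ 1 - (1 - β) ^ 2 / 2 * (1 - r) := by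
      refine le_of_mul_le_mul_right ?_ hM
      linarith
    rw [abs_of_nonneg hc0]
    have := min_le_right (1 - β) ((1 - β) ^ 2 / 2 * (1 - r))
    linarith
  · push Not at hFz
    obtain ⟨w, hw⟩ := hFz
    have hw0 : w ≠ 0 := by
      rintro rfl
      apply hw
      simp only [hF, map_zero, LinearMap.zero_apply, AddChar.map_zero_eq_one, mul_one]
      exact_mod_cast hsum
    have hξ : HeisData.ω (p := p) w ≠ 0 := fun h => hw0 (hnd w fun v => by rw [h]; rfl)
    have h1 : (c : ℂ) * hF f w = (1 / (N : ℂ)) * ∑ j, (hF (hP (a j) f) w + hF (hL (a j) f) w) / 2 := by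
      simp only [hF, ← Finset.sum_add_distrib, Finset.sum_div]
      rw [Finset.sum_comm, Finset.mul_sum, Finset.mul_sum]
      refine Finset.sum_congr rfl fun x _ => ?_
      rw [← mul_assoc, ← Complex.ofReal_mul, ← hKx x]
      push_cast
      rw [mul_assoc, Finset.sum_mul]
      congr 1
      exact Finset.sum_congr rfl fun j _ => by ring
    simp only [hF_P, hF_L, add_self_div_two] at h1
    rw [Finset.sum_ite, Finset.sum_const_zero, add_zero, Finset.sum_const, nsmul_eq_mul,
      ← mul_assoc] at h1
    have h2 := mul_right_cancel₀ hw h1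
    have h3 : c = ((Finset.univ.filter fun j => HeisData.ω (p := p) w (a j).1 = 0).card : ℝ) / N := by
      have : (c : ℂ) = ((((Finset.univ.filter fun j =>
        HeisData.ω (p := p) w (a j).1 = 0).card : ℝ) / N : ℝ) : ℂ) := by
        rw [h2]; push_cast; ring
      exact_mod_cast this
    have h4 : c ≤ β := by
      rw [h3]
      convert ha _ hξ
    have h5 : 0 ≤ c := by rw [h3]; positivity
    rw [abs_of_nonneg h5]
    have := min_le_left (1 - β) ((1 - β) ^ 2 / 2 * (1 - r))
    linarith
end
end
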